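/- arXiv:1305.3782 — 5 statements merged into one kernel-verified Lean document; each statement's English description precedes it below -/
import Mathlib

section
/- Let P ⊆ ℝⁿ × ℝᵈ be a polytope such that the polytope p_x(P) is a simplex (its vertices are affinely independent) and every vertex of P is mapped by p_x to a vertex of p_x(P). Then the pair (P, p_x) has the PF-property. -/
open Set

/-!
An affinely independent finite set `V` admits affine functions with arbitrary prescribed values on
its points; the indicator of `W ⊆ V` exposes `conv W` in the simplex `conv V`. On the other hand, by
Krein–Milman a compact convex set is generated by its extreme points, and the extreme points of an
exposed face `F` of `P` are extreme points of `P`. Since these are mapped to vertices of the simplex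
`f(P)`, the image `f(F)` is the convex hull of a set of vertices of `f(P)`, hence a face.
-/

section SupportingHyperplane

variable {𝕜 E : Type*} [Field 𝕜] [LinearOrder 𝕜] [IsStrictOrderedRing 𝕜] [AddCommGroup E]
  [Module 𝕜 E] {s : Set E} {M : 𝕜}

theorem convex_halfSpace_lt_union {l : E →ₗ[𝕜] 𝕜} (hs : Convex 𝕜 s) (hle : ∀ x ∈ s, l x ≤ M) :
    Convex 𝕜 ({x | l x < M} ∪ s) := by
  have combo_lt : ∀ ⦃x y : E⦄ ⦃a b : 𝕜⦄, l x < M → l y ≤ M → 0 < a → 0 < b → a + b = 1 →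
      l (a • x + b • y) < M := by
    intro x y a b hx hy ha hb hab
    calc l (a • x + b • y) = a * l x + b * l y := by simp
      _ < a * M + b * M :=
        add_lt_add_of_lt_of_le (mul_lt_mul_of_pos_left hx ha) (mul_le_mul_of_nonneg_left hy hb.le)
      _ = M := by rw [← add_mul, hab, one_mul]
  rw [convex_iff_forall_pos]
  rintro x (hx | hx) y hy a b ha hb hab
  · exact .inl (combo_lt hx (hy.elim le_of_lt (hle y)) ha hb hab)
  · rcases hy with hy | hy
    · rw [add_comm (a • x)]
      exact .inl (combo_lt hy (hle x hx) hb ha (by rwa [add_comm]))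
    · exact .inr (hs hx hy ha.le hb.le hab)

theorem apply_le_of_mem_convexHull {l : E →ₗ[𝕜] 𝕜} (hle : ∀ v ∈ s, l v ≤ M) :
    ∀ x ∈ convexHull 𝕜 s, l x ≤ M :=
  convexHull_min hle (convex_halfSpace_le l.isLinear M)

theorem convexHull_setOf_apply_eq {l : E →ₗ[𝕜] 𝕜} (hle : ∀ v ∈ s, l v ≤ M) :
    convexHull 𝕜 {v ∈ s | l v = M} = {x ∈ convexHull 𝕜 s | l x = M} := by
  have level_hull : ∀ x ∈ convexHull 𝕜 {v ∈ s | l v = M}, l x = M :=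
    convexHull_min (fun _ hv => hv.2) (convex_hyperplane l.isLinear M)
  have hull_subset : convexHull 𝕜 s ⊆ {x | l x < M} ∪ convexHull 𝕜 {v ∈ s | l v = M} :=
    convexHull_min
      (fun v hv => (hle v hv).lt_or_eq.imp_right fun h => subset_convexHull 𝕜 _ ⟨hv, h⟩)
      (convex_halfSpace_lt_union (convex_convexHull 𝕜 _) fun x hx => (level_hull x hx).le)
  ext x
  exact ⟨fun hx => ⟨convexHull_mono (sep_subset _ _) hx, level_hull x hx⟩,
    fun hx => (hull_subset hx.1).resolve_left hx.2.not_lt⟩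

theorem isExposed_convexHull_setOf_apply_eq [TopologicalSpace 𝕜] [TopologicalSpace E]
    {l : StrongDual 𝕜 E} (hle : ∀ v ∈ s, l v ≤ M) :
    IsExposed 𝕜 (convexHull 𝕜 s) (convexHull 𝕜 {v ∈ s | l v = M}) := by
  have hull_le : ∀ x ∈ convexHull 𝕜 s, l x ≤ M :=
    apply_le_of_mem_convexHull (l := l.toLinearMap) hle
  have level_eq : convexHull 𝕜 {v ∈ s | l v = M} = {x ∈ convexHull 𝕜 s | l x = M} :=
    convexHull_setOf_apply_eq (l := l.toLinearMap) hle
  rw [level_eq]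
  rintro ⟨w, hw, hwM⟩
  refine ⟨l, ?_⟩
  ext x
  refine and_congr_right fun hx => ⟨fun hxM y hy => ?_, fun hmax => ?_⟩
  · exact (hull_le y hy).trans_eq hxM.symm
  · exact (hull_le x hx).antisymm (hwM.symm.trans_le (hmax w hw))

end SupportingHyperplane

section Simplex

theorem exists_strongDual_eq_add_const {𝕜 E ι : Type*} [Field 𝕜] [TopologicalSpace 𝕜]
    [IsTopologicalRing 𝕜] [AddCommGroup E] [Module 𝕜 E] [TopologicalSpace E] [SeparatingDual 𝕜 E]
    [Finite ι] {p : ι → E} (hp : AffineIndependent 𝕜 p) (g : ι → 𝕜) :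
    ∃ (l : StrongDual 𝕜 E) (c : 𝕜), ∀ i, l (p i) = g i + c := by
  classical
  rcases isEmpty_or_nonempty ι with _ | ⟨⟨i₀⟩⟩
  · exact ⟨0, 0, isEmptyElim⟩
  have hlin := (affineIndependent_iff_linearIndependent_vsub 𝕜 p i₀).1 hp
  obtain ⟨l, hl⟩ := SeparatingDual.dualMap_surjective_iff.2 hlin
    (Finsupp.linearCombination 𝕜 fun i : {i // i ≠ i₀} => g i - g i₀)
  refine ⟨l, l (p i₀) - g i₀, fun i => ?_⟩
  rcases eq_or_ne i i₀ with rfl | hi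
  · ring
  have hdiff : l (p i) - l (p i₀) = g i - g i₀ := by
    simpa using LinearMap.congr_fun hl (Finsupp.single ⟨i, hi⟩ 1)
  linear_combination hdiff

theorem isExposed_convexHull_of_subset_of_affineIndependent {𝕜 E : Type*} [Field 𝕜]
    [LinearOrder 𝕜] [IsStrictOrderedRing 𝕜] [TopologicalSpace 𝕜] [IsTopologicalRing 𝕜]
    [AddCommGroup E] [Module 𝕜 E] [TopologicalSpace E] [SeparatingDual 𝕜 E] {V W : Set E}
    (hV : V.Finite) (hind : AffineIndependent 𝕜 ((↑) : V → E)) (hWV : W ⊆ V) :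
    IsExposed 𝕜 (convexHull 𝕜 V) (convexHull 𝕜 W) := by
  classical
  have := hV.to_subtype
  obtain ⟨l, c, hl⟩ := exists_strongDual_eq_add_const hind fun v => if (v : E) ∈ W then 1 else 0
  have hlV : ∀ v ∈ V, l v = (if v ∈ W then 1 else 0) + c := fun v hv => hl ⟨v, hv⟩
  have hle : ∀ v ∈ V, l v ≤ 1 + c := by
    intro v hv
    rw [hlV v hv]
    split_ifs <;> simp
  have hW : {v ∈ V | l v = 1 + c} = W := by
    ext v
    refine ⟨fun ⟨hv, hvl⟩ => ?_, fun hv => ⟨hWV hv, by simp [hlV v (hWV hv), hv]⟩⟩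
    by_contra hvW
    simp [hlV v hv, hvW] at hvl
  simpa only [hW] using isExposed_convexHull_setOf_apply_eq hle

end Simplex

section Projection

variable {E F : Type*} [AddCommGroup E] [Module ℝ E] [TopologicalSpace E] [T2Space E]
  [IsTopologicalAddGroup E] [ContinuousSMul ℝ E] [LocallyConvexSpace ℝ E]
  [AddCommGroup F] [Module ℝ F] [TopologicalSpace F] [IsTopologicalAddGroup F] [ContinuousSMul ℝ F]

theorem image_eq_convexHull_image_extremePoints [T2Space F] (f : E →ᴬ[ℝ] F) {K : Set E}
    (hK : IsCompact K) (hconv : Convex ℝ K) (hfin : (f '' K.extremePoints ℝ).Finite) :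
    f '' K = convexHull ℝ (f '' K.extremePoints ℝ) := by
  have krein_milman := closure_convexHull_extremePoints hK hconv
  calc f '' K = f '' closure (convexHull ℝ (K.extremePoints ℝ)) := by rw [krein_milman]
    _ = closure (f '' convexHull ℝ (K.extremePoints ℝ)) :=
      image_closure_of_isCompact (by rwa [krein_milman]) f.continuous.continuousOn
    _ = closure (convexHull ℝ (f '' K.extremePoints ℝ)) :=
      congrArg closure (f.toAffineMap.image_convexHull _)
    _ = convexHull ℝ (f '' K.extremePoints ℝ) := (hfin.isClosed_convexHull ℝ).closure_eq

theorem simplex_projection_pf_property_general [SeparatingDual ℝ F] (f : E →ᴬ[ℝ] F) {P : Set E}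
    (hP : IsCompact P) (hconv : Convex ℝ P) (hfin : ((f '' P).extremePoints ℝ).Finite)
    (hsimplex : AffineIndependent ℝ ((↑) : (f '' P).extremePoints ℝ → F))
    (hvert : MapsTo f (P.extremePoints ℝ) ((f '' P).extremePoints ℝ)) {A : Set E}
    (hA : IsExposed ℝ P A) : IsExposed ℝ (f '' P) (f '' A) := by
  have : T2Space F := SeparatingDual.t2Space (R := ℝ)
  have vertices_P : f '' P.extremePoints ℝ = (f '' P).extremePoints ℝ :=
    hvert.image_subset.antisymm (surjOn_extremePoints_image f hP)
  have vertices_A : f '' A.extremePoints ℝ ⊆ (f '' P).extremePoints ℝ :=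
    (hvert.mono_left hA.isExtreme.extremePoints_subset_extremePoints).image_subset
  have hull_P : f '' P = convexHull ℝ ((f '' P).extremePoints ℝ) := by
    rw [← vertices_P]
    exact image_eq_convexHull_image_extremePoints f hP hconv (vertices_P ▸ hfin)
  have hull_A : f '' A = convexHull ℝ (f '' A.extremePoints ℝ) :=
    image_eq_convexHull_image_extremePoints f (hA.isCompact hP) (hA.convex hconv)
      (hfin.subset vertices_A)
  have exposed := isExposed_convexHull_of_subset_of_affineIndependent hfin hsimplex vertices_A
  rwa [← hull_P, ← hull_A] at exposed

end Projection

/-- If `P ⊆ ℝⁿ × ℝᵈ` is a polytope such that `p_x(P)` is a simplex (its vertex set is affinely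
independent) and every vertex of `P` is projected by `p_x` to a vertex of `p_x(P)`, then the
pair `(P, p_x)` has the PF-property. -/
theorem simplex_projection_pf_property {n d : ℕ}
    (P : Set ((Fin n → ℝ) × (Fin d → ℝ)))
    (hP : ∃ s : Set ((Fin n → ℝ) × (Fin d → ℝ)), s.Finite ∧ P = convexHull ℝ s)
    (hsimplex : AffineIndependent ℝ
      ((↑) : Set.extremePoints ℝ (Prod.fst '' P) → (Fin n → ℝ)))
    (hvert : ∀ v ∈ Set.extremePoints ℝ P,
        v.1 ∈ Set.extremePoints ℝ (Prod.fst '' P)) :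
    ∀ F : Set ((Fin n → ℝ) × (Fin d → ℝ)),
      IsExposed ℝ P F → IsExposed ℝ (Prod.fst '' P) (Prod.fst '' F) := by
  obtain ⟨s, hs, rfl⟩ := hP
  exact fun _ => simplex_projection_pf_property_general
    (ContinuousLinearMap.fst ℝ (Fin n → ℝ) (Fin d → ℝ)).toContinuousAffineMap
    (hs.isCompact_convexHull ℝ) (convex_convexHull ℝ s)
    (finite_set_of_fin_dim_affineIndependent ℝ hsimplex) hsimplex hvert
end

section
/- Let P* := {(x, y₁, y₂) ∈ ℝ × ℝ² : x − y₁ − y₂ ≤ 0, y₁ + y₂ + x ≤ 2, y₁ − y₂ − x ≤ 0, y₂ − y₁ − x ≤ 0}. Then p_x(P*) = [0, 1], and P* is a polyhedral relation of type (1, 2) affinely generated by the four affine maps ρ₁ : x ↦ (x, 0), ρ₂ : x ↦ (0, x), ρ₃ : x ↦ (1 − x, 1), ρ₄ : x ↦ (1, 1 − x); that is, for every x ∈ [0, 1], P* ∩ p_x⁻¹(x) = conv{(x, ρ_j(x)) : 1 ≤ j ≤ 4}. -/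
open Set

/-!
In the coordinates `u = y₁ + y₂`, `v = y₁ - y₂` the inequalities defining `P*` read
`x ≤ u ≤ 2 - x` and `-x ≤ v ≤ x`. Hence the fibre over `x ∈ [0, 1]` is a rectangle, and a rectangle
is the convex hull of its four corners, because convex hulls commute with products. The linear
change of coordinates back to `(y₁, y₂)` carries these corners to the points `ρ_j(x)`.
-/

/-- The linear change of coordinates `(y, z) ↦ (y + z, y - z)`, which straightens the fibres of
`P*` into axis-parallel rectangles. -/
@[simps]
def addSubEquiv (𝕜 : Type*) [Field 𝕜] [NeZero (2 : 𝕜)] : (𝕜 × 𝕜) ≃ₗ[𝕜] 𝕜 × 𝕜 where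
  toFun p := (p.1 + p.2, p.1 - p.2)
  invFun q := ((q.1 + q.2) / 2, (q.1 - q.2) / 2)
  map_add' p q := by ext <;> simp only [Prod.fst_add, Prod.snd_add] <;> ring
  map_smul' c p := by
    ext <;> simp only [Prod.smul_fst, Prod.smul_snd, smul_eq_mul, RingHom.id_apply] <;> ring
  left_inv p := by ext <;> field_simp <;> ring
  right_inv q := by ext <;> field_simp <;> ring

section

variable {𝕜 : Type*} [Field 𝕜] [LinearOrder 𝕜] [IsStrictOrderedRing 𝕜]

theorem convexHull_pair_prod_pair {a b c d : 𝕜} (hab : a ≤ b) (hcd : c ≤ d) :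
    convexHull 𝕜 ({a, b} ×ˢ {c, d}) = Icc a b ×ˢ Icc c d := by
  rw [convexHull_prod, convexHull_pair, convexHull_pair, segment_eq_Icc hab, segment_eq_Icc hcd]

theorem addSubEquiv_preimage_Icc_prod_Icc_eq_convexHull {a b c d : 𝕜} (hab : a ≤ b) (hcd : c ≤ d) :
    addSubEquiv 𝕜 ⁻¹' (Icc a b ×ˢ Icc c d) =
      convexHull 𝕜 ((addSubEquiv 𝕜).symm '' ({a, b} ×ˢ {c, d})) := by
  rw [← LinearEquiv.image_symm_eq_preimage, ← convexHull_pair_prod_pair hab hcd]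
  exact (addSubEquiv 𝕜).symm.toLinearMap.image_convexHull _

variable (𝕜) in
/-- The polytope `P*` of triples `(x, y₁, y₂)`, over an arbitrary linearly ordered field. -/
def pstar : Set (𝕜 × 𝕜 × 𝕜) :=
  {p | p.1 - p.2.1 - p.2.2 ≤ 0 ∧ p.2.1 + p.2.2 + p.1 ≤ 2 ∧
    p.2.1 - p.2.2 - p.1 ≤ 0 ∧ p.2.2 - p.2.1 - p.1 ≤ 0}

theorem mk_mem_pstar_iff {x : 𝕜} {y : 𝕜 × 𝕜} :
    (x, y) ∈ pstar 𝕜 ↔ addSubEquiv 𝕜 y ∈ Icc x (2 - x) ×ˢ Icc (-x) x := by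
  simp only [pstar, mem_ofPred_eq, addSubEquiv_apply, mem_prod, mem_Icc]
  constructor
  · rintro ⟨h₁, h₂, h₃, h₄⟩
    refine ⟨⟨?_, ?_⟩, ?_, ?_⟩ <;> linarith
  · rintro ⟨⟨h₁, h₂⟩, h₃, h₄⟩
    refine ⟨?_, ?_, ?_, ?_⟩ <;> linarith

theorem pstar_inter_fst_preimage_singleton (x : 𝕜) :
    pstar 𝕜 ∩ Prod.fst ⁻¹' {x} =
      {x} ×ˢ (addSubEquiv 𝕜 ⁻¹' (Icc x (2 - x) ×ˢ Icc (-x) x)) := by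
  ext ⟨x', y⟩
  rw [mem_inter_iff, mk_mem_pstar_iff, and_comm]
  exact and_congr_right (by rintro rfl; rfl)

theorem image_fst_pstar : Prod.fst '' pstar 𝕜 = Icc 0 1 := by
  ext x
  rw [← inter_singleton_nonempty, image_inter_nonempty_iff, pstar_inter_fst_preimage_singleton,
    prod_nonempty_iff, (addSubEquiv 𝕜).surjective.nonempty_preimage, prod_nonempty_iff,
    nonempty_Icc, nonempty_Icc, mem_Icc]
  constructor
  · rintro ⟨-, h₁, h₂⟩
    constructor <;> linarith
  · rintro ⟨h₀, h₁⟩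
    exact ⟨singleton_nonempty x, by linarith, by linarith⟩

theorem addSubEquiv_symm_image_corners (x : 𝕜) :
    (addSubEquiv 𝕜).symm '' ({x, 2 - x} ×ˢ {-x, x}) = {(x, 0), (0, x), (1 - x, 1), (1, 1 - x)} := by
  simp only [insert_prod, singleton_prod, image_union, image_pair, addSubEquiv_symm_apply]
  rw [insert_union, singleton_union, insert_comm]
  ring_nf

theorem pstar_polyhedral_relation_general :
    Prod.fst '' pstar 𝕜 = Icc 0 1 ∧
      ∀ x ∈ Icc (0 : 𝕜) 1,
        pstar 𝕜 ∩ Prod.fst ⁻¹' {x} =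
          convexHull 𝕜 {(x, x, 0), (x, 0, x), (x, 1 - x, 1), (x, 1, 1 - x)} := by
  refine ⟨image_fst_pstar, fun x ⟨hx0, hx1⟩ => ?_⟩
  calc pstar 𝕜 ∩ Prod.fst ⁻¹' {x}
      = {x} ×ˢ (addSubEquiv 𝕜 ⁻¹' (Icc x (2 - x) ×ˢ Icc (-x) x)) :=
        pstar_inter_fst_preimage_singleton x
    _ = {x} ×ˢ convexHull 𝕜 {(x, 0), (0, x), (1 - x, 1), (1, 1 - x)} := by
        rw [addSubEquiv_preimage_Icc_prod_Icc_eq_convexHull (by linarith) (by linarith),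
          addSubEquiv_symm_image_corners]
    _ = convexHull 𝕜 ({x} ×ˢ {(x, 0), (0, x), (1 - x, 1), (1, 1 - x)}) := by
        rw [convexHull_prod, convexHull_singleton]
    _ = convexHull 𝕜 {(x, x, 0), (x, 0, x), (x, 1 - x, 1), (x, 1, 1 - x)} := by
        simp only [singleton_prod, image_insert_eq, image_singleton]

end

/-- Let `P* = {(x, y₁, y₂) ∈ ℝ × ℝ² : x − y₁ − y₂ ≤ 0, y₁ + y₂ + x ≤ 2, y₁ − y₂ − x ≤ 0,
y₂ − y₁ − x ≤ 0}`.  Then `p_x(P*) = [0, 1]` and `P*` is a polyhedral relation of type `(1, 2)`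
affinely generated by `ρ₁ : x ↦ (x, 0)`, `ρ₂ : x ↦ (0, x)`, `ρ₃ : x ↦ (1 − x, 1)`,
`ρ₄ : x ↦ (1, 1 − x)`: for every `x ∈ [0, 1]`,
`P* ∩ p_x⁻¹(x) = conv{(x, ρ_j(x)) : 1 ≤ j ≤ 4}`. -/
theorem pstar_polyhedral_relation
    (Pstar : Set (ℝ × ℝ × ℝ))
    (hPstar : Pstar = {p : ℝ × ℝ × ℝ |
      p.1 - p.2.1 - p.2.2 ≤ 0 ∧ p.2.1 + p.2.2 + p.1 ≤ 2 ∧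
      p.2.1 - p.2.2 - p.1 ≤ 0 ∧ p.2.2 - p.2.1 - p.1 ≤ 0}) :
    Prod.fst '' Pstar = Set.Icc (0 : ℝ) 1 ∧
      ∀ x ∈ Set.Icc (0 : ℝ) 1,
        Pstar ∩ Prod.fst ⁻¹' {x} =
          convexHull ℝ {(x, x, 0), (x, 0, x), (x, 1 - x, 1), (x, 1, 1 - x)} := by
  subst hPstar
  exact pstar_polyhedral_relation_general
end

section
/- Let n ≥ 2, let Q_m ⊆ ℝ^m denote the parity polytope (the convex hull of the 0/1-vectors in ℝ^m with an even number of coordinates equal to 1), and let P* := {(x, y₁, y₂) ∈ ℝ × ℝ² : x − y₁ − y₂ ≤ 0, y₁ + y₂ + x ≤ 2, y₁ − y₂ − x ≤ 0, y₂ − y₁ − x ≤ 0}. Define Q*_n := {(x, y, z) ∈ ℝ × ℝ² × ℝ^{n−2} : (x, z) ∈ Q_{n−1}, (x, y) ∈ P*}. Then the projection of Q*_n onto the coordinates (y, z), i.e. p_{y,z}(Q*_n) ⊆ ℝ² × ℝ^{n−2} ≅ ℝⁿ, equals the parity polytope Q_n. -/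
open Set

/-- The parity polytope `Q_m ⊆ ℝ^m`: the convex hull of the `0/1`-vectors with an even number
of coordinates equal to `1`. -/
def parityPolytope (m : ℕ) : Set (Fin m → ℝ) :=
  convexHull ℝ {v : Fin m → ℝ | (∀ i, v i = 0 ∨ v i = 1) ∧ Even {i | v i = 1}.ncard}

/-!
Write a vector of `ℝⁿ` as `(y, z)` with `y ∈ ℝ²`. At a vertex of `Q_n` the parity of `z` decides
which diagonal of the unit square has `y` as an endpoint, so `Q_n` is the convex hull of
`{(0,0), (1,1)} × V₀ ∪ {(0,1), (1,0)} × V₁`, where `V₀` and `V₁` are the even and the odd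
`0/1`-vectors. Now `P*` is the hull of the two diagonals put at the heights `x = 0` and `x = 1`, and
`Q_{n-1}` is the hull of `V₀` and `V₁` put at the same heights. Such hulls can be glued along `x`:
a point of `P*` at height `x` is `(1 - x) u₀ + x u₁` with `u₀`, `u₁` on the two diagonals, and
`(x, z) ↦ ((1 - x) u₀ + x u₁, z)` is an affine map that sends the vertices of `Q_{n-1}` into `Q_n`.
-/

theorem exists_mem_Icc_mul_eq {𝕜 : Type*} [Field 𝕜] [LinearOrder 𝕜] [IsStrictOrderedRing 𝕜]
    {a b : 𝕜} (hb : 0 ≤ b) (hba : b ≤ a) : ∃ t ∈ Icc (0 : 𝕜) 1, a * t = b := by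
  refine ⟨b / a, ⟨div_nonneg hb (hb.trans hba), div_le_one_of_le₀ hba (hb.trans hba)⟩, ?_⟩
  exact mul_div_cancel_of_imp' fun ha ↦ le_antisymm (ha ▸ hba) hb

section CayleyHull

variable {𝕜 E F : Type*} [Field 𝕜] [LinearOrder 𝕜]
  [AddCommGroup E] [Module 𝕜 E] [AddCommGroup F] [Module 𝕜 F]

theorem map_mem_convexHull_iff (e : E ≃ₗ[𝕜] F) {s : Set E} {t : Set F}
    (hst : ∀ v, e v ∈ t ↔ v ∈ s) (v : E) : e v ∈ convexHull 𝕜 t ↔ v ∈ convexHull 𝕜 s := by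
  obtain rfl : e ⁻¹' t = s := Set.ext hst
  have image_hull : e '' convexHull 𝕜 (e ⁻¹' t) = convexHull 𝕜 t := by
    simpa [image_preimage_eq _ e.surjective] using e.toLinearMap.image_convexHull (e ⁻¹' t)
  rw [← image_hull, e.injective.mem_set_image]

variable (𝕜) in
/-- The convex hull of the Cayley embedding of a pair of sets: `A₀` is placed at height `0` and
`A₁` at height `1`, the height being the first coordinate. -/
def cayleyHull (A₀ A₁ : Set E) : Set (𝕜 × E) :=
  convexHull 𝕜 ({0} ×ˢ A₀ ∪ {1} ×ˢ A₁)

theorem zero_prodMk_mem_cayleyHull {A₀ A₁ : Set E} {y : E} (hy : y ∈ A₀) :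
    ((0 : 𝕜), y) ∈ cayleyHull 𝕜 A₀ A₁ :=
  subset_convexHull 𝕜 _ (.inl ⟨rfl, hy⟩)

theorem one_prodMk_mem_cayleyHull {A₀ A₁ : Set E} {y : E} (hy : y ∈ A₁) :
    ((1 : 𝕜), y) ∈ cayleyHull 𝕜 A₀ A₁ :=
  subset_convexHull 𝕜 _ (.inr ⟨rfl, hy⟩)

theorem prodMk_lineMap_mem_of_mem_cayleyHull {A₀ A₁ : Set F} {C : Set (E × F)} (hC : Convex 𝕜 C)
    {u₀ u₁ : E} (h₀ : ∀ w ∈ A₀, (u₀, w) ∈ C) (h₁ : ∀ w ∈ A₁, (u₁, w) ∈ C) {x : 𝕜} {w : F}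
    (hw : (x, w) ∈ cayleyHull 𝕜 A₀ A₁) : (AffineMap.lineMap u₀ u₁ x, w) ∈ C := by
  let substitute : 𝕜 × F →ᵃ[𝕜] E × F :=
    (AffineMap.lineMap u₀ u₁).prodMap (AffineMap.id 𝕜 F)
  suffices cayleyHull 𝕜 A₀ A₁ ⊆ substitute ⁻¹' C from this hw
  refine convexHull_min (union_subset ?_ ?_) (hC.affine_preimage substitute)
  · rintro ⟨_, w⟩ ⟨rfl, hw⟩
    simpa [substitute] using h₀ w hw
  · rintro ⟨_, w⟩ ⟨rfl, hw⟩
    simpa [substitute] using h₁ w hw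

variable [IsStrictOrderedRing 𝕜]

theorem prodMk_mem_convexHull_of_prod_subset {S : Set E} {A : Set F} {T : Set (E × F)}
    (hST : S ×ˢ A ⊆ T) {u : E} {w : F} (hu : u ∈ convexHull 𝕜 S) (hw : w ∈ A) :
    (u, w) ∈ convexHull 𝕜 T := by
  refine convexHull_mono hST ?_
  rw [convexHull_prod]
  exact ⟨hu, subset_convexHull 𝕜 A hw⟩

theorem mem_cayleyHull_iff_exists_lineMap {A₀ A₁ : Set E} (h₀ : A₀.Nonempty) (h₁ : A₁.Nonempty)
    {x : 𝕜} {y : E} :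
    (x, y) ∈ cayleyHull 𝕜 A₀ A₁ ↔ x ∈ Icc (0 : 𝕜) 1 ∧ ∃ u₀ ∈ convexHull 𝕜 A₀,
      ∃ u₁ ∈ convexHull 𝕜 A₁, AffineMap.lineMap u₀ u₁ x = y := by
  rw [cayleyHull, convexHull_union ((singleton_nonempty _).prod h₀)
    ((singleton_nonempty _).prod h₁), convexHull_prod, convexHull_prod, convexHull_singleton,
    convexHull_singleton, mem_convexJoin]
  constructor
  · rintro ⟨⟨_, u₀⟩, ⟨rfl, hu₀⟩, ⟨_, u₁⟩, ⟨rfl, hu₁⟩, hxy⟩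
    rw [segment_eq_image_lineMap] at hxy
    obtain ⟨t, ht, hxy⟩ := hxy
    obtain ⟨rfl, rfl⟩ : t = x ∧ AffineMap.lineMap u₀ u₁ t = y := by
      simpa [AffineMap.lineMap_apply_module] using hxy
    exact ⟨ht, u₀, hu₀, u₁, hu₁, rfl⟩
  · rintro ⟨hx, u₀, hu₀, u₁, hu₁, rfl⟩
    refine ⟨(0, u₀), ⟨rfl, hu₀⟩, (1, u₁), ⟨rfl, hu₁⟩, ?_⟩
    rw [segment_eq_image_lineMap]
    exact ⟨x, hx, by simp [AffineMap.lineMap_apply_module]⟩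

theorem exists_mem_cayleyHull_and_mem_iff {S₀ S₁ : Set E} {A₀ A₁ : Set F}
    (hS₀ : S₀.Nonempty) (hS₁ : S₁.Nonempty) {y : E} {w : F} :
    (∃ x, (x, w) ∈ cayleyHull 𝕜 A₀ A₁ ∧ (x, y) ∈ cayleyHull 𝕜 S₀ S₁) ↔
      (y, w) ∈ convexHull 𝕜 (S₀ ×ˢ A₀ ∪ S₁ ×ˢ A₁) := by
  constructor
  · rintro ⟨x, hw, hy⟩
    obtain ⟨-, u₀, hu₀, u₁, hu₁, rfl⟩ := (mem_cayleyHull_iff_exists_lineMap hS₀ hS₁).1 hy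
    exact prodMk_lineMap_mem_of_mem_cayleyHull (convex_convexHull 𝕜 _)
      (fun _ ↦ prodMk_mem_convexHull_of_prod_subset subset_union_left hu₀)
      (fun _ ↦ prodMk_mem_convexHull_of_prod_subset subset_union_right hu₁) hw
  · let gluing : Set (𝕜 × E × F) :=
      {q | (q.1, q.2.2) ∈ cayleyHull 𝕜 A₀ A₁ ∧ (q.1, q.2.1) ∈ cayleyHull 𝕜 S₀ S₁}
    have convex_gluing : Convex 𝕜 gluing :=
      ((convex_convexHull 𝕜 _).linear_preimage
        ((LinearMap.fst 𝕜 𝕜 (E × F)).prod (.snd 𝕜 E F ∘ₗ .snd 𝕜 𝕜 (E × F)))).inter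
      ((convex_convexHull 𝕜 _).linear_preimage
        ((LinearMap.fst 𝕜 𝕜 (E × F)).prod (.fst 𝕜 E F ∘ₗ .snd 𝕜 𝕜 (E × F))))
    suffices convexHull 𝕜 (S₀ ×ˢ A₀ ∪ S₁ ×ˢ A₁) ⊆ LinearMap.snd 𝕜 𝕜 (E × F) '' gluing by
      intro h
      obtain ⟨⟨x, _⟩, hx, rfl⟩ := this h
      exact ⟨x, hx⟩
    refine convexHull_min (union_subset ?_ ?_) (convex_gluing.linear_image _)
    · rintro ⟨y, w⟩ ⟨hy, hw⟩
      exact ⟨(0, y, w), ⟨zero_prodMk_mem_cayleyHull hw, zero_prodMk_mem_cayleyHull hy⟩, rfl⟩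
    · rintro ⟨y, w⟩ ⟨hy, hw⟩
      exact ⟨(1, y, w), ⟨one_prodMk_mem_cayleyHull hw, one_prodMk_mem_cayleyHull hy⟩, rfl⟩

end CayleyHull

section SquareDiagonals

/-- The vertices of the unit square of even parity. Their hull, a diagonal of the square, is the
level `x = 0` of `P*`. -/
def evenPairs : Set (ℝ × ℝ) := {(0, 0), (1, 1)}

/-- The vertices of the unit square of odd parity. Their hull, the other diagonal of the square, is
the level `x = 1` of `P*`. -/
def oddPairs : Set (ℝ × ℝ) := {(0, 1), (1, 0)}

theorem evenPairs_nonempty : evenPairs.Nonempty := insert_nonempty _ _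

theorem oddPairs_nonempty : oddPairs.Nonempty := insert_nonempty _ _

theorem mem_convexHull_evenPairs {u : ℝ × ℝ} :
    u ∈ convexHull ℝ evenPairs ↔ ∃ s ∈ Icc (0 : ℝ) 1, (s, s) = u := by
  simp [evenPairs, convexHull_pair, segment_eq_image_lineMap, AffineMap.lineMap_apply_module]

theorem mem_convexHull_oddPairs {u : ℝ × ℝ} :
    u ∈ convexHull ℝ oddPairs ↔ ∃ t ∈ Icc (0 : ℝ) 1, (t, 1 - t) = u := by
  simp [oddPairs, convexHull_pair, segment_eq_image_lineMap, AffineMap.lineMap_apply_module]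

theorem mem_cayleyHull_evenPairs_oddPairs {x y₁ y₂ : ℝ} :
    (x, y₁, y₂) ∈ cayleyHull ℝ evenPairs oddPairs ↔
      x - y₁ - y₂ ≤ 0 ∧ y₁ + y₂ + x ≤ 2 ∧ y₁ - y₂ - x ≤ 0 ∧ y₂ - y₁ - x ≤ 0 := by
  simp only [mem_cayleyHull_iff_exists_lineMap evenPairs_nonempty oddPairs_nonempty,
    mem_convexHull_evenPairs, mem_convexHull_oddPairs]
  constructor
  · rintro ⟨⟨hx₀, hx₁⟩, _, ⟨s, ⟨hs₀, hs₁⟩, rfl⟩, _, ⟨t, ⟨ht₀, ht₁⟩, rfl⟩, hy⟩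
    obtain ⟨rfl, rfl⟩ : (1 - x) * s + x * t = y₁ ∧ (1 - x) * s + x * (1 - t) = y₂ := by
      simpa [AffineMap.lineMap_apply_module] using hy
    have := mul_nonneg (sub_nonneg.2 hx₁) hs₀
    have := mul_nonneg (sub_nonneg.2 hx₁) (sub_nonneg.2 hs₁)
    have := mul_nonneg hx₀ ht₀
    have := mul_nonneg hx₀ (sub_nonneg.2 ht₁)
    refine ⟨?_, ?_, ?_, ?_⟩ <;> linarith
  · rintro ⟨h₁, h₂, h₃, h₄⟩
    obtain ⟨s, hs, hs_eq⟩ : ∃ s ∈ Icc (0 : ℝ) 1, (1 - x) * s = (y₁ + y₂ - x) / 2 :=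
      exists_mem_Icc_mul_eq (by linarith) (by linarith)
    obtain ⟨t, ht, ht_eq⟩ : ∃ t ∈ Icc (0 : ℝ) 1, x * t = (x + y₁ - y₂) / 2 :=
      exists_mem_Icc_mul_eq (by linarith) (by linarith)
    refine ⟨⟨by linarith, by linarith⟩, _, ⟨s, hs, rfl⟩, _, ⟨t, ht, rfl⟩, ?_⟩
    ext <;> simp only [AffineMap.lineMap_apply_module, Prod.fst_add, Prod.snd_add, Prod.smul_fst,
      Prod.smul_snd, smul_eq_mul] <;> linarith

end SquareDiagonals

section ParityVertices

variable {k : ℕ} {p : ZMod 2}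

/-- The `0/1`-vectors whose number of coordinates equal to `1` has residue `p` modulo `2`.
Both residues are needed because removing a coordinate equal to `1` flips the parity. -/
def parityVertices (k : ℕ) (p : ZMod 2) : Set (Fin k → ℝ) :=
  {v | (∀ i, v i = 0 ∨ v i = 1) ∧ ({i | v i = 1}.ncard : ZMod 2) = p}

theorem parityPolytope_eq_convexHull_parityVertices (k : ℕ) :
    parityPolytope k = convexHull ℝ (parityVertices k 0) := by
  simp only [parityPolytope, parityVertices, ZMod.natCast_eq_zero_iff_even]

theorem ncard_setOf_cons_eq {α : Type*} [DecidableEq α] (a b : α) (v : Fin k → α) :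
    {i | (Fin.cons a v : Fin (k + 1) → α) i = b}.ncard =
      (if a = b then 1 else 0) + {i | v i = b}.ncard := by
  simp only [Set.ncard_eq_toFinset_card', Set.toFinset_ofPred, Finset.card_filter,
    Fin.sum_univ_succ, Fin.cons_zero, Fin.cons_succ]

theorem cons_mem_parityVertices {a : ℝ} {v : Fin k → ℝ} :
    (Fin.cons a v : Fin (k + 1) → ℝ) ∈ parityVertices (k + 1) p ↔
      a = 0 ∧ v ∈ parityVertices k p ∨ a = 1 ∧ v ∈ parityVertices k (p + 1) := by
  simp only [parityVertices, mem_ofPred_eq, Fin.forall_fin_succ, Fin.cons_zero, Fin.cons_succ,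
    ncard_setOf_cons_eq, Nat.cast_add, Nat.cast_ite, Nat.cast_one, Nat.cast_zero,
    CharTwo.eq_add_iff_add_eq]
  by_cases h₀ : a = 0
  · simp [h₀]
  · by_cases h₁ : a = 1 <;> simp [h₀, h₁, add_comm]

theorem cons_cons_mem_parityVertices {a b : ℝ} {v : Fin k → ℝ} :
    (Fin.cons a (Fin.cons b v) : Fin (k + 2) → ℝ) ∈ parityVertices (k + 2) p ↔
      (a, b) ∈ evenPairs ∧ v ∈ parityVertices k p ∨
        (a, b) ∈ oddPairs ∧ v ∈ parityVertices k (p + 1) := by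
  simp only [cons_mem_parityVertices, evenPairs, oddPairs, mem_insert_iff, mem_singleton_iff,
    Prod.mk.injEq, CharTwo.add_cancel_right]
  tauto

theorem cons_mem_convexHull_parityVertices {x : ℝ} {z : Fin k → ℝ} :
    (Fin.cons x z : Fin (k + 1) → ℝ) ∈ convexHull ℝ (parityVertices (k + 1) p) ↔
      (x, z) ∈ cayleyHull ℝ (parityVertices k p) (parityVertices k (p + 1)) :=
  map_mem_convexHull_iff (Fin.consLinearEquiv ℝ fun _ ↦ ℝ) (fun _ ↦ cons_mem_parityVertices) (x, z)

theorem cons_cons_mem_convexHull_parityVertices {y : ℝ × ℝ} {z : Fin k → ℝ} :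
    (Fin.cons y.1 (Fin.cons y.2 z) : Fin (k + 2) → ℝ) ∈
        convexHull ℝ (parityVertices (k + 2) p) ↔
      (y, z) ∈ convexHull ℝ
        (evenPairs ×ˢ parityVertices k p ∪ oddPairs ×ˢ parityVertices k (p + 1)) :=
  map_mem_convexHull_iff
    (LinearEquiv.prodAssoc ℝ ℝ ℝ (Fin k → ℝ) ≪≫ₗ
      (LinearEquiv.refl ℝ ℝ).prodCongr (Fin.consLinearEquiv ℝ fun _ ↦ ℝ) ≪≫ₗ
      Fin.consLinearEquiv ℝ fun _ ↦ ℝ)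
    (fun _ ↦ cons_cons_mem_parityVertices) (y, z)

end ParityVertices

/-- For `n = m + 2 ≥ 2`, let
`Q*_n = {(x, y, z) ∈ ℝ × ℝ² × ℝ^{n−2} : (x, z) ∈ Q_{n−1}, (x, y) ∈ P*}`, where `Q_{n−1}` is the
parity polytope (with `(x, z)` listing the first and the last `n − 2` coordinates) and `P*` is
the polyhedral relation of Kaibel–Pashkovich.  Then the projection of `Q*_n` onto the `(y, z)`
coordinates, viewed in `ℝ² × ℝ^{n−2} ≅ ℝⁿ`, equals the parity polytope `Q_n`. -/
theorem parity_polytope_step (m : ℕ)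
    (Pstar : Set (ℝ × ℝ × ℝ))
    (hPstar : Pstar = {p : ℝ × ℝ × ℝ |
      p.1 - p.2.1 - p.2.2 ≤ 0 ∧ p.2.1 + p.2.2 + p.1 ≤ 2 ∧
      p.2.1 - p.2.2 - p.1 ≤ 0 ∧ p.2.2 - p.2.1 - p.1 ≤ 0})
    (Qstar : Set (ℝ × (ℝ × ℝ) × (Fin m → ℝ)))
    (hQstar : Qstar = {p : ℝ × (ℝ × ℝ) × (Fin m → ℝ) |
      (Fin.cons p.1 p.2.2 : Fin (m + 1) → ℝ) ∈ parityPolytope (m + 1) ∧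
        (p.1, p.2.1) ∈ Pstar}) :
    (fun p : ℝ × (ℝ × ℝ) × (Fin m → ℝ) =>
        (Fin.cons p.2.1.1 (Fin.cons p.2.1.2 p.2.2) : Fin (m + 2) → ℝ)) '' Qstar =
      parityPolytope (m + 2) := by
  subst hPstar hQstar
  ext w
  cases w using Fin.consCases with | cons y₁ w
  cases w using Fin.consCases with | cons y₂ z
  calc
    _ ↔ ∃ x, (Fin.cons x z : Fin (m + 1) → ℝ) ∈ parityPolytope (m + 1) ∧
        (x, y₁, y₂) ∈ cayleyHull ℝ evenPairs oddPairs := by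
      simp [mem_cayleyHull_evenPairs_oddPairs, Fin.cons_inj]
    _ ↔ ((y₁, y₂), z) ∈ convexHull ℝ
        (evenPairs ×ˢ parityVertices m 0 ∪ oddPairs ×ˢ parityVertices m (0 + 1)) := by
      simp only [parityPolytope_eq_convexHull_parityVertices, cons_mem_convexHull_parityVertices,
        exists_mem_cayleyHull_and_mem_iff evenPairs_nonempty oddPairs_nonempty]
    _ ↔ _ := by
      rw [parityPolytope_eq_convexHull_parityVertices]
      exact cons_cons_mem_convexHull_parityVertices.symm
end

section
/- Let G = (V, E) be a finite simple graph and U ⊆ V a set of vertices such that the induced subgraph G[U] is a clique. Then the pair (STAB(G), p_U) has the PF-property, where p_U : ℝ^V → ℝ^U is the projection onto the coordinates indexed by U; moreover p_U(STAB(G)) = STAB(G[U]), which is a simplex (the convex hull of the zero vector and the |U| unit vectors in ℝ^U). -/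
open Set

/-- The stable set polytope of a graph: the convex hull of the characteristic vectors of its
independent (stable) sets. -/
def stabPolytope {V : Type*} (G : SimpleGraph V) : Set (V → ℝ) :=
  convexHull ℝ
    {x : V → ℝ | ∃ S : Set V, (∀ u ∈ S, ∀ w ∈ S, ¬ G.Adj u w) ∧ x = S.indicator 1}

/-! A face `F` of `conv X` is the hull of `X ∩ F`, so a linear map `p` sends it to the hull of a
subset of `p '' X`. When `p '' X` is affinely independent, every subset of it spans an exposed face
of the simplex `conv (p '' X)`. For `STAB(G)` and a clique `U`, a stable set meets `U` in at most
one vertex, so `p '' X` consists of the zero vector and the unit vectors. -/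

section ConvexHull

variable {𝕜 E : Type*} [Ring 𝕜] [LinearOrder 𝕜] [IsStrictOrderedRing 𝕜] [AddCommGroup E]
  [Module 𝕜 E] {X T F : Set E}

lemma eq_convexHull_inter_of_isExtreme (hext : IsExtreme 𝕜 (convexHull 𝕜 X) F)
    (hconv : Convex 𝕜 F) : F = convexHull 𝕜 (X ∩ F) := by
  refine Subset.antisymm (fun z hz => ?_) (convexHull_min inter_subset_right hconv)
  suffices h : convexHull 𝕜 X ⊆ {x ∈ convexHull 𝕜 X | x ∈ F → x ∈ convexHull 𝕜 (X ∩ F)} from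
    (h (hext.subset hz)).2 hz
  refine convexHull_min
    (fun x hx => ⟨subset_convexHull 𝕜 X hx, fun hxF => subset_convexHull 𝕜 _ ⟨hx, hxF⟩⟩) ?_
  rw [convex_iff_openSegment_subset]
  rintro x ⟨hx, hxF⟩ y ⟨hy, hyF⟩ w hw
  refine ⟨(convex_convexHull 𝕜 X).openSegment_subset hx hy hw, fun hwF => ?_⟩
  exact (convex_convexHull 𝕜 _).openSegment_subset
    (hxF (hext.left_mem_of_mem_openSegment hx hy hwF hw))
    (hyF (hext.right_mem_of_mem_openSegment hx hy hwF hw)) hw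

lemma isExposed_convexHull_of_forall_le [TopologicalSpace 𝕜] [TopologicalSpace E]
    (l : StrongDual 𝕜 E) (M : 𝕜) (hTX : T ⊆ X) (hle : ∀ x ∈ X, l x ≤ M)
    (hT : ∀ x ∈ X, l x = M ↔ x ∈ T) : IsExposed 𝕜 (convexHull 𝕜 X) (convexHull 𝕜 T) := by
  rcases T.eq_empty_or_nonempty with rfl | ⟨t, ht⟩
  · simpa only [convexHull_empty] using isExposed_empty
  have hle_hull : ∀ y ∈ convexHull 𝕜 X, l y ≤ M :=
    convexHull_min hle (convex_halfSpace_le l.toLinearMap.isLinear M)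
  have hinter : X ∩ l.toExposed (convexHull 𝕜 X) = T := by
    ext x
    constructor
    · rintro ⟨hx, -, hmax⟩
      have htx := hmax t (subset_convexHull 𝕜 X (hTX ht))
      rw [(hT t (hTX ht)).2 ht] at htx
      exact (hT x hx).1 ((hle x hx).antisymm htx)
    · intro hx
      refine ⟨hTX hx, subset_convexHull 𝕜 X (hTX hx), fun y hy => ?_⟩
      rw [(hT x (hTX hx)).2 hx]
      exact hle_hull y hy
  have hexp : IsExposed 𝕜 (convexHull 𝕜 X) (l.toExposed (convexHull 𝕜 X)) :=
    ContinuousLinearMap.toExposed.isExposed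
  have hhull := eq_convexHull_inter_of_isExtreme hexp.isExtreme
    (hexp.convex (convex_convexHull 𝕜 X))
  rw [hinter] at hhull
  rwa [← hhull]

end ConvexHull

lemma exists_linearMap_eqOn_of_linearIndepOn {K E F : Type*} [DivisionRing K] [AddCommGroup E]
    [Module K E] [AddCommGroup F] [Module K F] {s : Set E} (hs : LinearIndepOn K id s) (f : E → F) :
    ∃ l : E →ₗ[K] F, EqOn l f s := by
  let b := Module.Basis.extend hs
  refine ⟨b.constr ℕ fun v => f v, fun v hv => ?_⟩
  have hbv := b.constr_basis ℕ (fun v => f v) ⟨v, Module.Basis.subset_extend hs hv⟩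
  rwa [Module.Basis.extend_apply_self] at hbv

section Simplex

variable {E : Type*} [AddCommGroup E] [Module ℝ E] [TopologicalSpace E] [IsTopologicalAddGroup E]
  [ContinuousSMul ℝ E] [T2Space E] [FiniteDimensional ℝ E] {X T : Set E}

lemma isExposed_convexHull_of_affineIndependent (hX : AffineIndependent ℝ ((↑) : X → E))
    (hTX : T ⊆ X) : IsExposed ℝ (convexHull ℝ X) (convexHull ℝ T) := by
  classical
  rcases T.eq_empty_or_nonempty with rfl | ⟨t, ht⟩
  · simpa only [convexHull_empty] using isExposed_empty
  have hli := (affineIndependent_set_iff_linearIndependent_vsub ℝ (hTX ht)).1 hX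
  obtain ⟨l, hl⟩ := exists_linearMap_eqOn_of_linearIndepOn (K := ℝ) hli
    fun v => if v + t ∈ T then (0 : ℝ) else -1
  have hlX : ∀ x ∈ X, l x = l t + if x ∈ T then 0 else -1 := by
    intro x hx
    rcases eq_or_ne x t with rfl | hne
    · rw [if_pos ht, add_zero]
    · have hlx := hl (mem_image_of_mem (· -ᵥ t) ⟨hx, hne⟩)
      simp only [vsub_eq_sub, map_sub, sub_add_cancel] at hlx
      rw [← hlx, add_sub_cancel]
  refine isExposed_convexHull_of_forall_le (LinearMap.toContinuousLinearMap l) (l t) hTX ?_ ?_ <;>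
  · intro x hx
    rw [LinearMap.coe_toContinuousLinearMap', hlX x hx]
    split_ifs with hxT <;> simp [hxT]

end Simplex

lemma affineIndependent_insert_zero_range_single (K ι : Type*) [DivisionRing K] [DecidableEq ι] :
    AffineIndependent K
      ((↑) : (insert 0 (range fun i : ι => Pi.single i (1 : K)) : Set (ι → K)) → ι → K) := by
  have hli := (Pi.linearIndependent_single_one ι K).linearIndepOn_id
  have hne : ∀ e ∈ range fun i : ι => Pi.single i (1 : K), e ≠ 0 := by
    rintro _ ⟨i, rfl⟩
    exact Pi.single_ne_zero_iff.2 one_ne_zero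
  have haff :=
    (linearIndependent_set_iff_affineIndependent_vadd_union_singleton K hne (0 : ι → K)).1 hli
  have htranslate (R : Set (ι → K)) :
      {(0 : ι → K)} ∪ (fun v => v +ᵥ (0 : ι → K)) '' R = insert 0 R := by
    simp only [vadd_eq_add, add_zero, image_id', singleton_union]
  rwa [htranslate] at haff

section ProjectedFaces

variable {E F : Type*} [AddCommGroup E] [Module ℝ E] [TopologicalSpace E]
  [AddCommGroup F] [Module ℝ F] [TopologicalSpace F]

/-- The projected faces property (PF-property) of a pair `(P, p)`: the image under `p` of every
face of `P` is a face of `p '' P`. Faces are exposed faces, the empty face included. -/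
def HasProjectedFaces (P : Set E) (p : E → F) : Prop :=
  ∀ A : Set E, IsExposed ℝ P A → IsExposed ℝ (p '' P) (p '' A)

lemma hasProjectedFaces_convexHull_of_affineIndependent_image [IsTopologicalAddGroup F]
    [ContinuousSMul ℝ F] [T2Space F] [FiniteDimensional ℝ F] {X : Set E} (p : E →ₗ[ℝ] F)
    (hX : AffineIndependent ℝ ((↑) : p '' X → F)) : HasProjectedFaces (convexHull ℝ X) p := by
  intro A hA
  rw [eq_convexHull_inter_of_isExtreme hA.isExtreme (hA.convex (convex_convexHull ℝ X)),
    p.image_convexHull, p.image_convexHull]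
  exact isExposed_convexHull_of_affineIndependent hX (image_mono inter_subset_left)

end ProjectedFaces

section StableSets

variable {V : Type*} (G : SimpleGraph V)

/-- The characteristic vectors of the stable sets of `G`, the generators of `STAB(G)`. -/
def stableVectors : Set (V → ℝ) :=
  (fun S : Set V => S.indicator 1) '' {S | G.IsIndepSet S}

lemma stabPolytope_eq_convexHull_stableVectors :
    stabPolytope G = convexHull ℝ (stableVectors G) := by
  have hindep (S : Set V) : G.IsIndepSet S ↔ ∀ u ∈ S, ∀ w ∈ S, ¬ G.Adj u w :=
    ⟨fun hS u hu w hw huw => hS hu hw huw.ne huw, fun hS u hu w hw _ => hS u hu w hw⟩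
  simp only [stabPolytope, stableVectors, image, mem_ofPred_eq, hindep, eq_comm]

lemma domRestrict_image_stableVectors (U : Set V) :
    U.domRestrict '' stableVectors G = stableVectors (G.induce U) := by
  rw [stableVectors, image_image]
  ext x
  constructor
  · rintro ⟨S, hS, rfl⟩
    exact ⟨Subtype.val ⁻¹' S, fun u hu w hw huw => hS hu hw (Subtype.coe_injective.ne huw), rfl⟩
  · rintro ⟨S, hS, rfl⟩
    refine ⟨Subtype.val '' S, ?_, ?_⟩
    · rintro _ ⟨u, hu, rfl⟩ _ ⟨w, hw, rfl⟩ huw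
      exact hS hu hw (ne_of_apply_ne Subtype.val huw)
    · ext w
      beta_reduce
      rw [domRestrict_apply, ← indicator_comp_right, preimage_image_eq S Subtype.val_injective,
        Pi.one_comp]

lemma domRestrict_image_stabPolytope (U : Set V) :
    U.domRestrict '' stabPolytope G = stabPolytope (G.induce U) := by
  rw [stabPolytope_eq_convexHull_stableVectors, stabPolytope_eq_convexHull_stableVectors,
    ← domRestrict_image_stableVectors]
  exact (LinearMap.funLeft ℝ ℝ ((↑) : U → V)).image_convexHull _

lemma stableVectors_top [DecidableEq V] :
    stableVectors (⊤ : SimpleGraph V) = insert 0 (range fun v => Pi.single v 1) := by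
  have hsingle (v : V) : ({v} : Set V).indicator (1 : V → ℝ) = Pi.single v 1 := by
    ext w
    simp [indicator_apply, Pi.single_apply]
  ext x
  constructor
  · rintro ⟨S, hS, rfl⟩
    have hsub : S.Subsingleton := fun u hu w hw => by_contra fun huw => hS hu hw huw huw
    rcases hsub.eq_empty_or_singleton with rfl | ⟨v, rfl⟩
    · exact Or.inl (indicator_empty 1)
    · exact Or.inr ⟨v, (hsingle v).symm⟩
  · rintro (rfl | ⟨v, rfl⟩)
    · exact ⟨∅, pairwise_empty _, indicator_empty 1⟩
    · exact ⟨{v}, pairwise_singleton _ _, hsingle v⟩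

end StableSets

theorem stab_clique_pf_property_general {V : Type*} (G : SimpleGraph V) (U : Set V) [Finite U]
    [DecidableEq U] (hU : G.IsClique U) :
    HasProjectedFaces (stabPolytope G) U.domRestrict ∧
      U.domRestrict '' stabPolytope G = stabPolytope (G.induce U) ∧
      stabPolytope (G.induce U) =
        convexHull ℝ (insert 0 (range fun u : U => Pi.single u (1 : ℝ))) := by
  have hvertices : stableVectors (G.induce U) = insert 0 (range fun u => Pi.single u 1) := by
    rw [G.induce_eq_top.2 hU, stableVectors_top]
  refine ⟨?_, domRestrict_image_stabPolytope G U, ?_⟩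
  · rw [stabPolytope_eq_convexHull_stableVectors]
    refine hasProjectedFaces_convexHull_of_affineIndependent_image
      (LinearMap.funLeft ℝ ℝ ((↑) : U → V)) ?_
    have himage : LinearMap.funLeft ℝ ℝ ((↑) : U → V) '' stableVectors G =
        insert 0 (range fun u => Pi.single u 1) :=
      (domRestrict_image_stableVectors G U).trans hvertices
    rw [himage]
    exact affineIndependent_insert_zero_range_single ℝ U
  · rw [stabPolytope_eq_convexHull_stableVectors, hvertices]

/-- If `U` induces a clique in the finite simple graph `G`, then `(STAB(G), p_U)` has the
PF-property, `p_U(STAB(G)) = STAB(G[U])`, and `STAB(G[U])` is the simplex given by the convex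
hull of the zero vector and the `|U|` unit vectors in `ℝ^U`. -/
theorem stab_clique_pf_property {V : Type*} [Fintype V] [DecidableEq V]
    (G : SimpleGraph V) (U : Finset V)
    (hclique : ∀ u ∈ U, ∀ w ∈ U, u ≠ w → G.Adj u w) :
    (∀ F : Set (V → ℝ), IsExposed ℝ (stabPolytope G) F →
        IsExposed ℝ ((fun z (u : {v // v ∈ U}) => z ↑u) '' stabPolytope G)
          ((fun z (u : {v // v ∈ U}) => z ↑u) '' F)) ∧
      (fun z (u : {v // v ∈ U}) => z ↑u) '' stabPolytope G =
        stabPolytope (SimpleGraph.induce (↑U : Set V) G) ∧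
      stabPolytope (SimpleGraph.induce (↑U : Set V) G) =
        convexHull ℝ
          ({0} ∪ {e : (↑U : Set V) → ℝ |
            ∃ u : (↑U : Set V), e = fun w => if w = u then 1 else 0}) := by
  simpa only [insert_eq, range, eq_comm, funext_iff, Pi.single_apply] using!
    stab_clique_pf_property_general G (U : Set V) hclique
end

section
/- Let G = (V, E) be a finite simple graph and V′ ⊆ V, and let p_{V′} : ℝ^V → ℝ^{V′} be the projection onto the coordinates indexed by V′. Then the pair (STAB(G), p_{V′}) has the PF-property if and only if any two vertices of V′ that are joined in G by a path all of whose inner vertices lie in V ∖ V′ are adjacent in G. -/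
open Set

/-!
If `u, w ∈ V'` are joined by an outer path, take a shortest path from `u` to `w` among those whose
vertices in `V'` are only `u` and `w`. It has no chords, so its vertices split by parity into two
stable sets `A` and `B`. Both lie on the face where the edge inequalities along the path are tight,
and on this face the coordinate at `u` determines the one at `w`. On `V'` the characteristic vectors
of `A` and `B` add up to that of `{u, w}`. If `u` and `w` were not adjacent, every `S ⊆ {u, w}`
would be stable, and since the vectors of `S` and `{u, w} \ S` have the same sum, a projected face
that is a face would contain them all; this is incompatible with that rigidity.

Conversely, let `φ T` be the maximum of a linear functional over the stable sets with trace `T` on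
`V'`. When outer paths only join adjacent vertices, two stable sets without neighbours of `v ∈ V'`
in their traces can be swapped inside the set of vertices reached from `v` by outer walks. Hence
`φ (T ∪ {v}) + φ ∅ = φ {v} + φ T`, so the fibrewise maximum of the functional is affine in the
projection, and this affine function exposes the projected face.
-/

section Convexity

variable {E W : Type*}

/-- The projected faces property of a pair `(P, p)`, for faces in the sense of exposed faces. -/
def HasPFProperty [AddCommGroup E] [Module ℝ E] [TopologicalSpace E]
    [AddCommGroup W] [Module ℝ W] [TopologicalSpace W] (P : Set E) (p : E → W) : Prop :=
  ∀ F, IsExposed ℝ P F → IsExposed ℝ (p '' P) (p '' F)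

lemma mem_of_isExposed_of_add_eq_add [AddCommGroup E] [Module ℝ E] [TopologicalSpace E]
    {P F : Set E} (hF : IsExposed ℝ P F) {a b x y : E} (ha : a ∈ F) (hb : b ∈ F)
    (hx : x ∈ P) (hy : y ∈ P) (h : a + b = x + y) : x ∈ F := by
  obtain ⟨l, rfl⟩ := hF ⟨a, ha⟩
  refine ⟨hx, fun z hz => ?_⟩
  have hl : l a + l b = l x + l y := by rw [← map_add, h, map_add]
  linarith [ha.2 z hz, hb.2 y hy]

lemma isExposed_image_toExposed_of_isGreatest_fiber
    [AddCommGroup E] [Module ℝ E] [TopologicalSpace E]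
    [AddCommGroup W] [Module ℝ W] [TopologicalSpace W] {P : Set E} {p : E → W}
    {l : StrongDual ℝ E} {m : StrongDual ℝ W} {c : ℝ}
    (h : ∀ x ∈ P, IsGreatest (l '' (P ∩ p ⁻¹' {p x})) (c + m (p x))) :
    IsExposed ℝ (p '' P) (p '' l.toExposed P) := by
  have hle : ∀ x ∈ P, l x ≤ c + m (p x) := fun x hx => (h x hx).2 ⟨x, ⟨hx, rfl⟩, rfl⟩
  suffices p '' l.toExposed P = m.toExposed (p '' P) from
    this ▸ ContinuousLinearMap.toExposed.isExposed
  ext y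
  constructor
  · rintro ⟨x, ⟨hx, hmax⟩, rfl⟩
    refine ⟨mem_image_of_mem p hx, forall_mem_image.2 fun z hz => ?_⟩
    obtain ⟨z', ⟨hz', -⟩, hlz'⟩ := (h z hz).1
    linarith [hmax z' hz', hle x hx]
  · rintro ⟨⟨x, hx, rfl⟩, hmax⟩
    obtain ⟨x', ⟨hx', hpx'⟩, hlx'⟩ := (h x hx).1
    refine ⟨x', ⟨hx', fun z hz => ?_⟩, hpx'⟩
    linarith [hle z hz, hmax _ (mem_image_of_mem p hz)]

lemma isGreatest_fiber_convexHull [AddCommGroup E] [Module ℝ E] [AddCommGroup W] [Module ℝ W]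
    {X : Set E} {p : E →ₗ[ℝ] W} {l : E →ₗ[ℝ] ℝ} {m : W →ₗ[ℝ] ℝ} {c : ℝ}
    (h : ∀ x ∈ X, IsGreatest (l '' (X ∩ p ⁻¹' {p x})) (c + m (p x))) {x : E}
    (hx : x ∈ convexHull ℝ X) :
    IsGreatest (l '' (convexHull ℝ X ∩ p ⁻¹' {p x})) (c + m (p x)) := by
  let g : E →ₗ[ℝ] ℝ := l - m ∘ₗ p
  have hle : convexHull ℝ X ⊆ g ⁻¹' Iic c :=
    convexHull_min (fun x hx => sub_le_iff_le_add.2 ((h x hx).2 ⟨x, ⟨hx, rfl⟩, rfl⟩))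
      ((convex_Iic c).linear_preimage g)
  have hlift : convexHull ℝ X ⊆ p ⁻¹' (p '' (convexHull ℝ X ∩ g ⁻¹' {c})) := by
    refine convexHull_min (fun x hx => ?_) (((convex_convexHull ℝ X).inter
      ((convex_singleton c).linear_preimage g)).linear_image p |>.linear_preimage p)
    obtain ⟨x', ⟨hx', hpx'⟩, hlx'⟩ := (h x hx).1
    rw [mem_preimage, mem_singleton_iff] at hpx'
    exact ⟨x', ⟨subset_convexHull ℝ X hx', by simp [g, hlx', hpx']⟩, hpx'⟩
  constructor
  · obtain ⟨x', ⟨hx', hgx'⟩, hpx'⟩ := hlift hx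
    exact ⟨x', ⟨hx', hpx'⟩, by rw [← hpx']; exact sub_eq_iff_eq_add.1 hgx'⟩
  · rintro _ ⟨y, ⟨hy, hpy⟩, rfl⟩
    rw [mem_preimage, mem_singleton_iff] at hpy
    rw [← hpy]
    exact sub_le_iff_le_add.1 (hle hy)

end Convexity

section Indicators

variable {V : Type*}

lemma indicator_one_add_indicator_one_congr {M : Type*} [AddMonoidWithOne M] {A B A' B' : Set V}
    {v : V} (hunion : v ∈ A ∪ B ↔ v ∈ A' ∪ B') (hinter : v ∈ A ∩ B ↔ v ∈ A' ∩ B') :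
    (A.indicator 1 v + B.indicator 1 v : M) = A'.indicator 1 v + B'.indicator 1 v := by
  classical
  rw [← indicator_union_add_inter_apply _ A B, ← indicator_union_add_inter_apply _ A' B']
  simp only [indicator_apply, hunion, hinter]

lemma indicator_one_ite_add_indicator_one_ite {M : Type*} [AddMonoidWithOne M] (W A B : Set V) :
    (W.ite A B).indicator 1 + (W.ite B A).indicator 1 =
      (A.indicator 1 + B.indicator 1 : V → M) := by
  funext v
  exact indicator_one_add_indicator_one_congr (by simp only [Set.ite]; grind)
    (by simp only [Set.ite]; grind)

lemma funLeft_indicator_one_eq_iff {R : Type*} [Semiring R] [Nontrivial R] {V' A B : Set V} :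
    LinearMap.funLeft R R ((↑) : V' → V) (A.indicator 1) =
      LinearMap.funLeft R R (↑) (B.indicator 1) ↔ A ∩ V' = B ∩ V' := by
  classical
  simp only [funext_iff, LinearMap.funLeft_apply, indicator_apply, Pi.one_apply, Subtype.forall,
    Set.ext_iff, mem_inter_iff, and_congr_left_iff]
  refine forall₂_congr fun v _ => ?_
  by_cases hA : v ∈ A <;> by_cases hB : v ∈ B <;> simp [hA, hB]

lemma finite_range_strongDual_indicator_one (l : StrongDual ℝ (V → ℝ)) :
    (range fun A : Set V => l (A.indicator 1)).Finite := by
  have hl : l.toLinearMap ∈ Submodule.span ℝ (range (LinearMap.proj : V → (V → ℝ) →ₗ[ℝ] ℝ)) :=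
    (LinearMap.mem_span_iff_continuous _).2 l.continuous
  change (range fun A : Set V => l.toLinearMap (A.indicator 1)).Finite
  generalize l.toLinearMap = f at hl
  induction hl using Submodule.span_induction with
  | mem f hf =>
    obtain ⟨v, rfl⟩ := hf
    refine (toFinite {0, 1}).subset (range_subset_iff.2 fun A => ?_)
    exact indicator_eq_zero_or_self A 1 v
  | zero => exact (finite_singleton 0).subset (range_subset_iff.2 fun A => rfl)
  | add f g _ _ hf hg =>
    exact (hf.add hg).subset (range_subset_iff.2 fun A => add_mem_add ⟨A, rfl⟩ ⟨A, rfl⟩)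
  | smul a f _ hf =>
    exact (hf.image (a • ·)).subset (range_subset_iff.2 fun A => ⟨_, ⟨A, rfl⟩, rfl⟩)

end Indicators

section StablePolytope

variable {V : Type*} {G : SimpleGraph V}

lemma stabPolytope_eq_convexHull_image_isIndepSet (G : SimpleGraph V) :
    stabPolytope G = convexHull ℝ ((fun S : Set V => S.indicator 1) '' {S | G.IsIndepSet S}) := by
  have hstable (S : Set V) : (∀ u ∈ S, ∀ w ∈ S, ¬ G.Adj u w) ↔ G.IsIndepSet S :=
    ⟨fun h u hu w hw _ => h u hu w hw, fun h u hu w hw huw => h hu hw huw.ne huw⟩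
  simp only [stabPolytope, hstable, image, mem_ofPred_eq, eq_comm]

lemma indicator_one_mem_stabPolytope {S : Set V} (hS : G.IsIndepSet S) :
    S.indicator 1 ∈ stabPolytope G := by
  rw [stabPolytope_eq_convexHull_image_isIndepSet]
  exact subset_convexHull ℝ _ (mem_image_of_mem _ hS)

lemma add_le_one_of_mem_stabPolytope {a b : V} (hab : G.Adj a b) {x : V → ℝ}
    (hx : x ∈ stabPolytope G) : x a + x b ≤ 1 := by
  classical
  rw [stabPolytope_eq_convexHull_image_isIndepSet] at hx
  refine convexHull_min (forall_mem_image.2 fun S hS => ?_) ((convex_Iic 1).linear_preimage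
    (LinearMap.proj (R := ℝ) (φ := fun _ : V => ℝ) a + LinearMap.proj b)) hx
  have hnot : ¬ (a ∈ S ∧ b ∈ S) := fun h => hS h.1 h.2 hab.ne hab
  by_cases ha : a ∈ S <;> by_cases hb : b ∈ S <;> simp_all

/-- The face of `STAB(G)` on which the edge inequality `x a + x b ≤ 1` is tight for every edge
`ab` of the walk `q`. -/
def walkFace {u w : V} (q : G.Walk u w) : Set (V → ℝ) :=
  {x ∈ stabPolytope G | ∀ d ∈ q.darts, x d.fst + x d.snd = 1}

lemma walkFace_cons {a b w : V} (hab : G.Adj a b) (q : G.Walk b w) :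
    walkFace (.cons hab q) = {x ∈ stabPolytope G | x a + x b = 1} ∩ walkFace q := by
  ext x
  simp only [walkFace, SimpleGraph.Walk.darts_cons, List.forall_mem_cons, mem_ofPred_eq,
    mem_inter_iff]
  tauto

lemma isExposed_setOf_add_eq_one {a b : V} (hab : G.Adj a b) :
    IsExposed ℝ (stabPolytope G) {x ∈ stabPolytope G | x a + x b = 1} := by
  intro _
  let l : StrongDual ℝ (V → ℝ) := .proj a + .proj b
  refine ⟨l, Set.ext fun x => and_congr_right fun hx => ⟨fun h y hy => ?_, fun h => ?_⟩⟩
  · exact (add_le_one_of_mem_stabPolytope hab hy).trans_eq h.symm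
  · refine le_antisymm (add_le_one_of_mem_stabPolytope hab hx) ?_
    simpa [l, hab.ne'] using
      h _ (indicator_one_mem_stabPolytope (pairwise_singleton a fun u w => ¬ G.Adj u w))

lemma isExposed_walkFace {u w : V} (q : G.Walk u w) :
    IsExposed ℝ (stabPolytope G) (walkFace q) := by
  induction q with
  | nil => simpa [walkFace] using IsExposed.refl (stabPolytope G)
  | cons hab q ih =>
    rw [walkFace_cons]
    exact (isExposed_setOf_add_eq_one hab).inter ih

lemma indicator_one_mem_walkFace {u w : V} {q : G.Walk u w} {S S' : Set V}
    (hS : G.IsIndepSet S) (hS' : G.IsIndepSet S') (hq : ∀ v ∈ q.support, v ∈ S ∪ S') :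
    S.indicator 1 ∈ walkFace q := by
  classical
  refine ⟨indicator_one_mem_stabPolytope hS, fun d hd => ?_⟩
  have hfst := hq _ (q.dart_fst_mem_support_of_mem_darts hd)
  have hsnd := hq _ (q.dart_snd_mem_support_of_mem_darts hd)
  have hmem : d.fst ∈ S ↔ d.snd ∉ S :=
    ⟨fun h h' => hS h h' d.adj.ne d.adj, fun h => hfst.resolve_right fun h' =>
      hS' h' (hsnd.resolve_left h) d.adj.ne d.adj⟩
  by_cases h : d.snd ∈ S <;> simp [hmem, h]

lemma apply_eq_of_mem_walkFace {u w : V} {q : G.Walk u w} {x y : V → ℝ} (hx : x ∈ walkFace q)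
    (hy : y ∈ walkFace q) (hu : x u = y u) : x w = y w := by
  induction q with
  | nil => exact hu
  | cons hab q ih =>
    rw [walkFace_cons] at hx hy
    exact ih hx.2 hy.2 (by linarith [hx.1.2, hy.1.2])

end StablePolytope

section Geodesics

variable {V : Type*} {G : SimpleGraph V} {u w : V}

lemma injOn_dist_support_of_length_eq_dist {q : G.Walk u w} (hq : q.length = G.dist u w) :
    InjOn (G.dist u) {v | v ∈ q.support} := by
  classical
  have hget : ∀ v ∈ q.support, q.getVert (G.dist u v) = v := fun v hv => by
    rw [← SimpleGraph.length_eq_dist_of_subwalk hq (q.isSubwalk_takeUntil hv)]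
    exact SimpleGraph.Walk.getVert_length_takeUntil hv
  intro a ha b hb hab
  rw [← hget a ha, hab, hget b hb]

lemma even_dist_iff_not_of_adj_of_length_eq_dist {q : G.Walk u w} (hq : q.length = G.dist u w)
    {a b : V} (ha : a ∈ q.support) (hb : b ∈ q.support) (hab : G.Adj a b) :
    Even (G.dist u a) ↔ ¬ Even (G.dist u b) := by
  have hne : G.dist u a ≠ G.dist u b := fun h =>
    hab.ne (injOn_dist_support_of_length_eq_dist hq ha hb h)
  have hdiff := hab.diff_dist_adj (u := u)
  grind

lemma exists_walk_union_eq_support_of_forall_mem {T : Set V} (p : G.Walk u w)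
    (hp : ∀ v ∈ p.support, v ∈ T) :
    ∃ (q : G.Walk u w) (A B : Set V), (∀ v ∈ q.support, v ∈ T) ∧ A ∪ B = {v | v ∈ q.support} ∧
      Disjoint A B ∧ G.IsIndepSet A ∧ G.IsIndepSet B := by
  obtain ⟨q, hq⟩ := (p.induce T hp).reachable.exists_walk_length_eq_dist
  let q' : G.Walk u w := q.map (SimpleGraph.Embedding.induce T).toHom
  let D : Set V := (↑) '' {v : T | Even ((G.induce T).dist ⟨u, hp u p.start_mem_support⟩ v)}
  have hT : ∀ v ∈ q'.support, ∃ hv : v ∈ T, ⟨v, hv⟩ ∈ q.support := by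
    intro v hv
    have hsupport : q'.support = q.support.map (↑) := q.support_map _
    obtain ⟨v', hv', rfl⟩ := List.mem_map.1 (hsupport ▸ hv)
    exact ⟨v'.2, hv'⟩
  have hD : ∀ a ∈ q'.support, ∀ b ∈ q'.support, G.Adj a b → (a ∈ D ↔ b ∉ D) := by
    intro a ha b hb hab
    obtain ⟨haT, ha⟩ := hT a ha
    obtain ⟨hbT, hb⟩ := hT b hb
    simpa [D, haT, hbT] using even_dist_iff_not_of_adj_of_length_eq_dist hq ha hb hab
  refine ⟨q', {v | v ∈ q'.support} ∩ D, {v | v ∈ q'.support} \ D, fun v hv => (hT v hv).1,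
    inter_union_sdiff _ _, disjoint_sdiff_inter.symm, ?_, ?_⟩
  · exact fun a ha b hb _ hab => (hD a ha.1 b hb.1 hab).1 ha.2 hb.2
  · exact fun a ha b hb _ hab => ha.2 ((hD a ha.1 b hb.1 hab).2 hb.2)

end Geodesics

section OuterPaths

variable {V : Type*} {V' : Set V} {G : SimpleGraph V}

/-- Any two vertices of `V'` joined by an outer path, that is a path whose inner vertices lie
outside `V'`, are adjacent. -/
def IsOuterPathClosed (G : SimpleGraph V) (V' : Set V) : Prop :=
  ∀ u ∈ V', ∀ w ∈ V', u ≠ w →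
    (∃ p : G.Walk u w, p.IsPath ∧ ∀ v ∈ p.support, v ≠ u → v ≠ w → v ∉ V') → G.Adj u w

lemma restrict_indicator_one_mem_image_walkFace
    (h : HasPFProperty (stabPolytope G) (LinearMap.funLeft ℝ ℝ ((↑) : V' → V))) {u w : V}
    (huw : G.IsIndepSet {u, w}) {q : G.Walk u w} {A B S : Set V} (hA : G.IsIndepSet A)
    (hB : G.IsIndepSet B) (hAB : Disjoint A B) (hq : A ∪ B = {v | v ∈ q.support})
    (hends : ∀ v ∈ V', v ∈ q.support ↔ v ∈ ({u, w} : Set V)) (hS : S ⊆ {u, w}) :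
    LinearMap.funLeft ℝ ℝ ((↑) : V' → V) (S.indicator 1) ∈
      LinearMap.funLeft ℝ ℝ (↑) '' walkFace q := by
  have hAF : A.indicator 1 ∈ walkFace q := indicator_one_mem_walkFace hA hB hq.ge
  have hBF : B.indicator 1 ∈ walkFace q :=
    indicator_one_mem_walkFace hB hA (union_comm A B ▸ hq.ge)
  refine mem_of_isExposed_of_add_eq_add (h _ (isExposed_walkFace q))
    (mem_image_of_mem _ hAF) (mem_image_of_mem _ hBF)
    (mem_image_of_mem _ (indicator_one_mem_stabPolytope (huw.mono hS)))
    (mem_image_of_mem _ (indicator_one_mem_stabPolytope (S := {u, w} \ S)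
      (huw.mono sdiff_subset))) ?_
  funext ⟨v, hv⟩
  apply indicator_one_add_indicator_one_congr
  · rw [hq, union_sdiff_cancel hS]
    exact hends v hv
  · rw [hAB.inter_eq, inter_sdiff_self]

theorem isOuterPathClosed_of_hasPFProperty
    (h : HasPFProperty (stabPolytope G) (LinearMap.funLeft ℝ ℝ ((↑) : V' → V))) :
    IsOuterPathClosed G V' := by
  rintro u hu w hw huw ⟨p, -, hp⟩
  by_contra hnadj
  have hpair : G.IsIndepSet {u, w} :=
    pairwise_pair.2 fun _ => ⟨hnadj, fun hwu => hnadj hwu.symm⟩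
  obtain ⟨q, A, B, hqT, hq, hAB, hA, hB⟩ :=
    exists_walk_union_eq_support_of_forall_mem (T := {v | v ∈ V' → v ∈ ({u, w} : Set V)}) p
      fun v hv hvV' => or_iff_not_imp_left.2 fun hvu => by_contra fun hvw => hp v hv hvu hvw hvV'
  have hends : ∀ v ∈ V', v ∈ q.support ↔ v ∈ ({u, w} : Set V) := fun v hv =>
    ⟨fun hvq => hqT v hvq hv, by rintro (rfl | rfl) <;> simp⟩
  -- `S` agrees with `A` at `u` but not at `w`, so no point of the rigid face `walkFace q`
  -- restricts to its characteristic vector.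
  let S : Set V := {v ∈ ({u, w} : Set V) | v ∈ A ↔ v = u}
  have hSu : u ∈ S ↔ u ∈ A := by simp [S]
  have hSw : w ∈ S ↔ w ∉ A := by simp [S, huw.symm]
  obtain ⟨z, hz, hzS⟩ :=
    restrict_indicator_one_mem_image_walkFace h hpair hA hB hAB hq hends (sep_subset _ _ : S ⊆ _)
  have hzu : z u = S.indicator 1 u := congrFun hzS ⟨u, hu⟩
  have hzw : z w = S.indicator 1 w := congrFun hzS ⟨w, hw⟩
  have hzA : z w = A.indicator 1 w :=
    apply_eq_of_mem_walkFace hz (indicator_one_mem_walkFace hA hB hq.ge) <| by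
      classical
      simp only [hzu, indicator_apply, hSu]
  by_cases hwA : w ∈ A <;> simp [hzw, hSw, hwA] at hzA

/-- The vertices reachable from `v` along walks that do not meet `V'` after their start. -/
def outerReach (G : SimpleGraph V) (V' : Set V) (v : V) : Set V :=
  {y | ∃ p : G.Walk v y, ∀ z ∈ p.support, z ≠ v → z ∉ V'}

lemma outerReach_inter_eq_singleton {v : V} (hv : v ∈ V') : outerReach G V' v ∩ V' = {v} := by
  refine Subset.antisymm ?_ (singleton_subset_iff.2 ⟨⟨.nil, by simp⟩, hv⟩)
  rintro y ⟨⟨p, hp⟩, hy⟩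
  by_contra hyv
  exact hp y p.end_mem_support hyv hy

lemma mem_and_adj_of_adj_outerReach (hG : IsOuterPathClosed G V') {v x y : V} (hv : v ∈ V')
    (hy : y ∈ outerReach G V' v) (hx : x ∉ outerReach G V' v) (hyx : G.Adj y x) :
    x ∈ V' ∧ G.Adj v x := by
  classical
  obtain ⟨p, hp⟩ := hy
  have hpx : ∀ z ∈ (p.concat hyx).support, z ≠ v → z ≠ x → z ∉ V' := fun z hz hzv hzx => by
    refine hp z ?_ hzv
    simpa [SimpleGraph.Walk.support_concat, hzx] using hz
  have hxV' : x ∈ V' := by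
    by_contra hxV'
    exact hx ⟨p.concat hyx, fun z hz hzv hzV' => hpx z hz hzv (fun h => hxV' (h ▸ hzV')) hzV'⟩
  have hvx : v ≠ x := by
    rintro rfl
    exact hx ⟨.nil, by simp⟩
  exact ⟨hxV', hG v hv x hxV' hvx ⟨(p.concat hyx).bypass, SimpleGraph.Walk.bypass_isPath _,
    fun z hz => hpx z (SimpleGraph.Walk.support_bypass_subset_support _ hz)⟩⟩

/-- The stable sets of `G` with trace `T` on `V'`. -/
def stableExtensions (G : SimpleGraph V) (V' T : Set V) : Set (Set V) :=
  {A | G.IsIndepSet A ∧ A ∩ V' = T}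

lemma self_mem_stableExtensions {T : Set V} (hT : G.IsIndepSet T) (hTV' : T ⊆ V') :
    T ∈ stableExtensions G V' T :=
  ⟨hT, inter_eq_left.2 hTV'⟩

lemma ite_outerReach_mem_stableExtensions (hG : IsOuterPathClosed G V') {v : V} (hv : v ∈ V')
    {S T A B : Set V} (hA : A ∈ stableExtensions G V' S) (hB : B ∈ stableExtensions G V' T)
    (hvT : ∀ x ∈ T, ¬ G.Adj v x) :
    (outerReach G V' v).ite A B ∈ stableExtensions G V' (({v} : Set V).ite S T) := by
  have hcross : ∀ y ∈ A ∩ outerReach G V' v, ∀ x ∈ B \ outerReach G V' v, ¬ G.Adj y x := by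
    intro y hy x hx hyx
    obtain ⟨hxV', hvx⟩ := mem_and_adj_of_adj_outerReach hG hv hy.2 hx.2 hyx
    exact hvT x (hB.2 ▸ ⟨hx.1, hxV'⟩) hvx
  constructor
  · rintro x (hx | hx) y (hy | hy) hne hxy
    · exact hA.1 hx.1 hy.1 hne hxy
    · exact hcross x hx y hy hxy
    · exact hcross y hy x hx hxy.symm
    · exact hB.1 hx.1 hy.1 hne hxy
  · have hW := outerReach_inter_eq_singleton (G := G) hv
    rw [← hA.2, ← hB.2, ← hW]
    simp only [Set.ite]
    grind

/-- The largest value of `l` on the characteristic vectors of the stable sets of `G` with trace `T`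
on `V'`. The supremum is attained when `T` is a stable subset of `V'`; otherwise its value is
junk. -/
noncomputable def extensionMax (G : SimpleGraph V) (V' : Set V) (l : StrongDual ℝ (V → ℝ))
    (T : Set V) : ℝ :=
  sSup ((fun A : Set V => l (A.indicator 1)) '' stableExtensions G V' T)

lemma le_extensionMax (l : StrongDual ℝ (V → ℝ)) {T A : Set V}
    (hA : A ∈ stableExtensions G V' T) : l (A.indicator 1) ≤ extensionMax G V' l T :=
  le_csSup ((finite_range_strongDual_indicator_one l).subset (image_subset_range _ _)).bddAbove
    (mem_image_of_mem _ hA)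

lemma isGreatest_extensionMax (l : StrongDual ℝ (V → ℝ)) {T : Set V} (hT : G.IsIndepSet T)
    (hTV' : T ⊆ V') :
    IsGreatest ((fun A : Set V => l (A.indicator 1)) '' stableExtensions G V' T)
      (extensionMax G V' l T) :=
  ⟨Nonempty.csSup_mem ⟨_, mem_image_of_mem _ (self_mem_stableExtensions hT hTV')⟩
    ((finite_range_strongDual_indicator_one l).subset (image_subset_range _ _)),
    forall_mem_image.2 fun _ => le_extensionMax l⟩

lemma extensionMax_add_le_extensionMax_ite_add (hG : IsOuterPathClosed G V')
    (l : StrongDual ℝ (V → ℝ)) {v : V} (hv : v ∈ V') {S T : Set V}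
    (hS : G.IsIndepSet S) (hSV' : S ⊆ V') (hvS : ∀ x ∈ S, ¬ G.Adj v x)
    (hT : G.IsIndepSet T) (hTV' : T ⊆ V') (hvT : ∀ x ∈ T, ¬ G.Adj v x) :
    extensionMax G V' l S + extensionMax G V' l T ≤
      extensionMax G V' l (({v} : Set V).ite S T) +
        extensionMax G V' l (({v} : Set V).ite T S) := by
  obtain ⟨A, hA, hlA⟩ := (isGreatest_extensionMax l hS hSV').1
  obtain ⟨B, hB, hlB⟩ := (isGreatest_extensionMax l hT hTV').1
  rw [← hlA, ← hlB, ← map_add, ← indicator_one_ite_add_indicator_one_ite (outerReach G V' v),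
    map_add]
  exact add_le_add (le_extensionMax l (ite_outerReach_mem_stableExtensions hG hv hA hB hvT))
    (le_extensionMax l (ite_outerReach_mem_stableExtensions hG hv hB hA hvS))

lemma extensionMax_insert_add (hG : IsOuterPathClosed G V') (l : StrongDual ℝ (V → ℝ))
    {v : V} {T : Set V} (hvT : v ∉ T) (hT : G.IsIndepSet (insert v T)) (hvTV' : insert v T ⊆ V') :
    extensionMax G V' l (insert v T) + extensionMax G V' l ∅ =
      extensionMax G V' l {v} + extensionMax G V' l T := by
  obtain ⟨hv, hTV'⟩ := insert_subset_iff.1 hvTV'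
  have hadj : ∀ x ∈ insert v T, ¬ G.Adj v x := fun x hx hvx =>
    hT (mem_insert v T) hx hvx.ne hvx
  have hsingleton : ({v} : Set V).ite (insert v T) ∅ = {v} := by simp
  have hempty : ({v} : Set V).ite T {v} = ∅ := by simp [Set.ite, hvT]
  have hrest : ({v} : Set V).ite ∅ (insert v T) = T := by simp [hvT]
  have hinsert : ({v} : Set V).ite {v} T = insert v T := by simp
  apply le_antisymm
  · have := extensionMax_add_le_extensionMax_ite_add hG l hv hT hvTV' hadj
      (pairwise_empty _) (empty_subset _) (by simp)
    rwa [hsingleton, hrest] at this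
  · have := extensionMax_add_le_extensionMax_ite_add hG l hv (pairwise_singleton v _)
      (singleton_subset_iff.2 hv) (by simp) (hT.mono (subset_insert v T)) hTV'
      fun x hx => hadj x (mem_insert_of_mem v hx)
    rwa [hinsert, hempty] at this

lemma extensionMax_eq_add_sum (hG : IsOuterPathClosed G V') (l : StrongDual ℝ (V → ℝ))
    (T : Finset V) (hT : G.IsIndepSet (T : Set V)) (hTV' : (T : Set V) ⊆ V') :
    extensionMax G V' l T = extensionMax G V' l ∅ +
      ∑ v ∈ T, (extensionMax G V' l {v} - extensionMax G V' l ∅) := by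
  classical
  induction T using Finset.induction_on with
  | empty => simp
  | insert v T hvT ih =>
    rw [Finset.coe_insert] at hT hTV' ⊢
    have hexchange := extensionMax_insert_add hG l (Finset.mem_coe.not.2 hvT) hT hTV'
    rw [Finset.sum_insert hvT]
    linarith [ih (hT.mono (subset_insert _ _)) ((subset_insert _ _).trans hTV')]

lemma isGreatest_fiber_indicator_one (l : StrongDual ℝ (V → ℝ)) {S : Set V}
    (hS : G.IsIndepSet S) :
    IsGreatest (l '' ((fun A : Set V => A.indicator 1) '' {A | G.IsIndepSet A} ∩
      LinearMap.funLeft ℝ ℝ ((↑) : V' → V) ⁻¹' {LinearMap.funLeft ℝ ℝ (↑) (S.indicator 1)}))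
      (extensionMax G V' l (S ∩ V')) := by
  convert isGreatest_extensionMax l (hS.mono inter_subset_left) inter_subset_right using 1
  rw [← image_inter_preimage, image_image]
  congr 1
  ext A
  exact and_congr_right fun _ => funLeft_indicator_one_eq_iff

theorem hasPFProperty_of_isOuterPathClosed {V' : Finset V} (hG : IsOuterPathClosed G V') :
    HasPFProperty (stabPolytope G) (LinearMap.funLeft ℝ ℝ ((↑) : ↥V' → V)) := by
  classical
  intro F hF hne
  obtain ⟨l, rfl⟩ := hF hne.of_image
  let d : V → ℝ := fun v => extensionMax G V' l {v} - extensionMax G V' l ∅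
  let m : StrongDual ℝ (↥V' → ℝ) := ∑ v : ↥V', d v • .proj v
  have hm (S : Set V) :
      m (LinearMap.funLeft ℝ ℝ (↑) (S.indicator 1)) = ∑ v ∈ V' with v ∈ S, d v := by
    rw [Finset.sum_filter, ← Finset.sum_coe_sort]
    simp [m, indicator_apply]
  have hgreatest : ∀ x ∈ stabPolytope G, IsGreatest
      (l '' (stabPolytope G ∩ LinearMap.funLeft ℝ ℝ ((↑) : ↥V' → V) ⁻¹'
        {LinearMap.funLeft ℝ ℝ (↑) x}))
      (extensionMax G V' l ∅ + m (LinearMap.funLeft ℝ ℝ (↑) x)) := by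
    rw [stabPolytope_eq_convexHull_image_isIndepSet]
    refine fun x => isGreatest_fiber_convexHull (forall_mem_image.2 fun S hS => ?_)
    have hSV' : S ∩ V' = ({v ∈ V' | v ∈ S} : Finset V) := by ext; simp [and_comm]
    have hvalue : extensionMax G V' l ∅ + m (LinearMap.funLeft ℝ ℝ (↑) (S.indicator 1)) =
        extensionMax G V' l (S ∩ V') := by
      rw [hm, hSV', extensionMax_eq_add_sum hG l _ (hSV' ▸ hS.mono inter_subset_left)
        (hSV' ▸ inter_subset_right)]
    exact hvalue ▸ isGreatest_fiber_indicator_one l hS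
  exact isExposed_image_toExposed_of_isGreatest_fiber hgreatest hne

end OuterPaths

theorem stab_pf_property_iff_paths_general {V : Type*} (G : SimpleGraph V) (V' : Finset V) :
    (∀ F : Set (V → ℝ), IsExposed ℝ (stabPolytope G) F →
        IsExposed ℝ ((fun z (u : {v // v ∈ V'}) => z ↑u) '' stabPolytope G)
          ((fun z (u : {v // v ∈ V'}) => z ↑u) '' F)) ↔
      (∀ u ∈ V', ∀ w ∈ V', u ≠ w →
        (∃ p : G.Walk u w, p.IsPath ∧
          ∀ v ∈ p.support, v ≠ u → v ≠ w → v ∉ V') →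
        G.Adj u w) :=
  ⟨isOuterPathClosed_of_hasPFProperty (V' := (V' : Set V)), hasPFProperty_of_isOuterPathClosed⟩

/-- For a finite simple graph `G = (V, E)` and `V' ⊆ V`, the pair `(STAB(G), p_{V'})` has the
PF-property if and only if any two (distinct) vertices of `V'` that are joined in `G` by a path
all of whose inner vertices lie in `V ∖ V'` are adjacent in `G`. -/
theorem stab_pf_property_iff_paths {V : Type*} [Fintype V] [DecidableEq V]
    (G : SimpleGraph V) (V' : Finset V) :
    (∀ F : Set (V → ℝ), IsExposed ℝ (stabPolytope G) F →
        IsExposed ℝ ((fun z (u : {v // v ∈ V'}) => z ↑u) '' stabPolytope G)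
          ((fun z (u : {v // v ∈ V'}) => z ↑u) '' F)) ↔
      (∀ u ∈ V', ∀ w ∈ V', u ≠ w →
        (∃ p : G.Walk u w, p.IsPath ∧
          ∀ v ∈ p.support, v ≠ u → v ≠ w → v ∉ V') →
        G.Adj u w) :=
  stab_pf_property_iff_paths_general G V'
end
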